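/- arXiv:2303.05011 — 3 statements merged into one kernel-verified Lean document; each statement's English description precedes it below -/
import Mathlib

section
/- Let d be a positive natural number, let μ be a probability measure on [0,∞) with finite second moment m₂ = ∫₀^∞ t² dμ(t) < ∞, and let ξ : ℝ^d → [0,∞) be a measurable function that is bounded and Lebesgue-integrable. Then, with ψ(u) = e^{−u} − 1 + u, one has lim_{λ→∞} λ ∫_{ℝ^d} ∫₀^∞ ψ( ξ(x) t / λ^{1/2} ) dμ(t) dx = (m₂ / 2) ∫_{ℝ^d} ξ(x)² dx, where the outer integral is with respect to Lebesgue measure on ℝ^d and the limit is taken as the real parameter λ tends to infinity. (This is the analytic core of the Gaussian scaling limit of the Poisson shot-noise field with finite second moment of amplitudes.) -/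
open MeasureTheory Filter Real Topology

lemma psi_nonneg (u : ℝ) : 0 ≤ Real.exp (-u) - 1 + u := by
  have := Real.add_one_le_exp (-u)
  linarith

lemma psi_le (u : ℝ) (hu : 0 ≤ u) : Real.exp (-u) - 1 + u ≤ u ^ 2 / 2 := by
  have h1 := Real.quadratic_le_exp_of_nonneg hu
  have h2 : Real.exp (-u) * Real.exp u = 1 := by rw [← Real.exp_add]; simp
  have h3 := Real.exp_pos (-u)
  have h4 : Real.exp (-u) * (1 + u + u ^ 2 / 2) ≤ 1 := by
    exact (mul_le_mul_of_nonneg_left h1 h3.le).trans h2.le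
  have h5 : 0 < 1 + u + u ^ 2 / 2 := by positivity
  have h6 : (1 : ℝ) ≤ (1 - u + u ^ 2 / 2) * (1 + u + u ^ 2 / 2) := by
    nlinarith [sq_nonneg (u ^ 2)]
  have := le_of_mul_le_mul_right (h4.trans h6) h5
  linarith

lemma psi_lim (a : ℝ) : Tendsto (fun lam : ℝ =>
    lam * (Real.exp (-(a / Real.sqrt lam)) - 1 + a / Real.sqrt lam)) atTop (𝓝 (a ^ 2 / 2)) := by
  have h0 : Tendsto (fun lam : ℝ => |a| / Real.sqrt lam) atTop (𝓝 0) :=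
    Real.tendsto_sqrt_atTop.const_div_atTop _
  have h1 : Tendsto (fun lam : ℝ => |a| ^ 3 / Real.sqrt lam) atTop (𝓝 0) :=
    Real.tendsto_sqrt_atTop.const_div_atTop _
  rw [tendsto_iff_norm_sub_tendsto_zero]
  refine squeeze_zero' (Eventually.of_forall fun _ => norm_nonneg _) ?_ h1
  filter_upwards [eventually_gt_atTop 0, h0.eventually (eventually_le_nhds zero_lt_one)]
    with lam hl hu
  have hs : 0 < Real.sqrt lam := Real.sqrt_pos.2 hl
  have hsq : Real.sqrt lam ^ 2 = lam := Real.sq_sqrt hl.le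
  have habs : |(-(a / Real.sqrt lam))| = |a| / Real.sqrt lam := by
    rw [abs_neg, abs_div, abs_of_pos hs]
  have hb := Real.exp_bound (x := -(a / Real.sqrt lam)) (by rw [habs]; exact hu)
    (n := 3) (by norm_num)
  rw [habs] at hb
  simp only [Finset.sum_range_succ, Finset.sum_range_zero] at hb
  norm_num [Nat.factorial] at hb
  generalize Real.sqrt lam = s at *
  subst hsq
  rw [Real.norm_eq_abs]
  have e : s ^ 2 * (Real.exp (-(a / s)) - 1 + a / s) - a ^ 2 / 2
      = s ^ 2 * (Real.exp (-(a / s)) - (1 + -(a / s) + (a / s) ^ 2 / 2)) := by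
    field_simp; ring
  rw [e, abs_mul, abs_of_pos hl]
  have e2 : |a| ^ 3 / s = s ^ 2 * (|a| / s) ^ 3 := by field_simp
  rw [e2]
  refine mul_le_mul_of_nonneg_left ?_ hl.le
  have : 0 ≤ (|a| / s) ^ 3 := by positivity
  refine hb.trans ?_
  linarith

/-- Analytic core of the Gaussian scaling limit of the Poisson shot-noise field
with finite second moment of amplitudes. -/
theorem stmt_0 (d : ℕ) (hd : 0 < d)
    (μ : Measure ℝ) [IsProbabilityMeasure μ] (hμsupp : μ (Set.Iio 0) = 0)
    (hm₂ : Integrable (fun t => t ^ 2) μ)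
    (ξ : (Fin d → ℝ) → ℝ) (hξmeas : Measurable ξ) (hξnn : ∀ x, 0 ≤ ξ x)
    (B : ℝ) (hξbd : ∀ x, ξ x ≤ B) (hξint : Integrable ξ) :
    Tendsto
      (fun lam : ℝ =>
        lam * ∫ x, ∫ t,
          (Real.exp (-(ξ x * t / Real.sqrt lam)) - 1 + ξ x * t / Real.sqrt lam) ∂μ)
      atTop
      (𝓝 ((∫ t, t ^ 2 ∂μ) / 2 * ∫ x, (ξ x) ^ 2)) := by
  have hsq : Integrable (fun x => (ξ x) ^ 2) := by
    refine (hξint.const_mul B).mono' (hξmeas.pow_const 2).aestronglyMeasurable ?_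
    refine Eventually.of_forall fun x => ?_
    rw [Real.norm_eq_abs, abs_of_nonneg (sq_nonneg _), sq]
    exact mul_le_mul_of_nonneg_right (hξbd x) (hξnn x)
  have hprod : Integrable (fun z : (Fin d → ℝ) × ℝ => (ξ z.1) ^ 2 * z.2 ^ 2)
      (volume.prod μ) := hsq.mul_prod hm₂
  have hbd : Integrable (fun z : (Fin d → ℝ) × ℝ => (ξ z.1 * z.2) ^ 2 / 2)
      (volume.prod μ) := by
    simpa only [mul_pow] using hprod.div_const 2
  have hnn : ∀ᵐ z ∂((volume : Measure (Fin d → ℝ)).prod μ), 0 ≤ z.2 := by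
    have : ∀ᵐ t ∂μ, 0 ≤ t := by
      rw [ae_iff]; simpa [Set.Iio] using hμsupp
    exact Measure.quasiMeasurePreserving_snd.ae this
  have hmeas : ∀ lam : ℝ, Measurable (fun z : (Fin d → ℝ) × ℝ =>
      lam * (Real.exp (-(ξ z.1 * z.2 / Real.sqrt lam)) - 1 + ξ z.1 * z.2 / Real.sqrt lam)) := by
    intro lam
    have : Measurable (fun z : (Fin d → ℝ) × ℝ => ξ z.1 * z.2 / Real.sqrt lam) :=
      ((hξmeas.comp measurable_fst).mul measurable_snd).div_const _
    exact ((this.neg.exp.sub_const 1).add this).const_mul lam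
  have hbound : ∀ lam : ℝ, 0 < lam → ∀ᵐ z ∂((volume : Measure (Fin d → ℝ)).prod μ),
      ‖lam * (Real.exp (-(ξ z.1 * z.2 / Real.sqrt lam)) - 1 + ξ z.1 * z.2 / Real.sqrt lam)‖
        ≤ (ξ z.1 * z.2) ^ 2 / 2 := by
    intro lam hl
    filter_upwards [hnn] with z hz
    rw [Real.norm_eq_abs, abs_of_nonneg (mul_nonneg hl.le (psi_nonneg _))]
    have h := psi_le (ξ z.1 * z.2 / Real.sqrt lam)
      (div_nonneg (mul_nonneg (hξnn _) hz) (Real.sqrt_nonneg _))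
    refine (mul_le_mul_of_nonneg_left h hl.le).trans (le_of_eq ?_)
    rw [div_pow, Real.sq_sqrt hl.le]
    field_simp
  have hlim := tendsto_integral_filter_of_dominated_convergence
    (μ := (volume : Measure (Fin d → ℝ)).prod μ) (l := (atTop : Filter ℝ))
    (F := fun lam z => lam * (Real.exp (-(ξ z.1 * z.2 / Real.sqrt lam)) - 1
      + ξ z.1 * z.2 / Real.sqrt lam))
    (f := fun z => (ξ z.1 * z.2) ^ 2 / 2)
    (fun z => (ξ z.1 * z.2) ^ 2 / 2)
    (Eventually.of_forall fun lam => (hmeas lam).aestronglyMeasurable)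
    ((eventually_gt_atTop 0).mono hbound) hbd
    (Eventually.of_forall fun z => psi_lim _)
  have hval : ∫ z, (ξ z.1 * z.2) ^ 2 / 2 ∂((volume : Measure (Fin d → ℝ)).prod μ)
      = (∫ t, t ^ 2 ∂μ) / 2 * ∫ x, (ξ x) ^ 2 := by
    simp only [mul_pow]
    rw [integral_div, integral_prod_mul (fun x => ξ x ^ 2) (fun t : ℝ => t ^ 2)]
    ring
  rw [hval] at hlim
  refine hlim.congr' ?_
  filter_upwards [eventually_gt_atTop 0] with lam hl
  rw [integral_prod _ (hbd.mono' (hmeas lam).aestronglyMeasurable (hbound lam hl))]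
  simp only [integral_const_mul]
end

section
/- Let α ∈ (1,2) and let μ be a probability measure on [0,∞) whose tail function F̄(t) = μ((t,∞)) is strictly positive for all t ≥ 0 and regularly varying at infinity with index −α, meaning that for every c > 0, F̄(c t)/F̄(t) → c^{−α} as t → ∞. Then for every fixed a > 0, lim_{G→∞} ∫₀^∞ (1 − e^{−a u}) · ( F̄(G u) / F̄(G) ) du = a^{α−1} · Γ(2−α)/(α−1), where the integral is with respect to Lebesgue measure on (0,∞) and Γ is the Gamma function. -/
open MeasureTheory Filter Real Topology

lemma aux_bd_int (C D p q : ℝ) (hp : -1 < p) (hq : q < -1) :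
    IntegrableOn (fun u : ℝ => if u ≤ 1 then C * u ^ p else D * u ^ q) (Set.Ioi 0) := by
  rw [← Set.Ioc_union_Ioi_eq_Ioi (zero_le_one' ℝ)]
  refine IntegrableOn.union ?_ ?_
  · have h : IntegrableOn (fun u : ℝ => C * u ^ p) (Set.Ioc 0 1) :=
      ((intervalIntegrable_iff_integrableOn_Ioc_of_le zero_le_one).1
        (intervalIntegral.intervalIntegrable_rpow' hp)).const_mul C
    refine h.congr_fun (fun u hu => ?_) measurableSet_Ioc
    simp [hu.2]
  · have h : IntegrableOn (fun u : ℝ => D * u ^ q) (Set.Ioi 1) :=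
      (integrableOn_Ioi_rpow_of_lt hq zero_lt_one).const_mul D
    refine h.congr_fun (fun u hu => ?_) measurableSet_Ioi
    have : ¬ u ≤ 1 := not_le.2 hu
    simp [this]

lemma aux_exp_bd (a u : ℝ) (ha : 0 < a) (hu : 0 < u) :
    0 ≤ 1 - Real.exp (-(a * u)) ∧ 1 - Real.exp (-(a * u)) ≤ 1 ∧
      1 - Real.exp (-(a * u)) ≤ a * u := by
  have h1 : Real.exp (-(a * u)) ≤ 1 := Real.exp_le_one_iff.2 (by have := mul_pos ha hu; linarith)
  have h2 := Real.exp_pos (-(a * u))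
  have h3 := Real.add_one_le_exp (-(a * u))
  exact ⟨by linarith, by linarith, by linarith⟩

lemma aux_prod_bd (a u x K L γ β : ℝ) (ha : 0 < a) (hu : 0 < u) (hx : 0 ≤ x)
    (h1 : u ≤ 1 → x ≤ K * u ^ (-γ)) (h2 : 1 < u → x ≤ L * u ^ (-β)) :
    ‖(1 - Real.exp (-(a * u))) * x‖ ≤
      if u ≤ 1 then (a * K) * u ^ (1 - γ) else L * u ^ (-β) := by
  obtain ⟨e0, e1, e2⟩ := aux_exp_bd a u ha hu
  rw [Real.norm_of_nonneg (mul_nonneg e0 hx)]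
  split_ifs with h
  · calc _ ≤ (a * u) * (K * u ^ (-γ)) :=
        mul_le_mul e2 (h1 h) hx (by positivity)
      _ = (a * K) * u ^ (1 - γ) := by
        rw [sub_eq_add_neg, Real.rpow_add hu, Real.rpow_one]; ring
  · calc _ ≤ 1 * x := mul_le_mul_of_nonneg_right e1 hx
      _ ≤ _ := by rw [one_mul]; exact h2 (not_le.1 h)

lemma aux_limit (α : ℝ) (hα₁ : 1 < α) (hα₂ : α < 2) (a : ℝ) (ha : 0 < a) :
    ∫ u in Set.Ioi (0 : ℝ), (1 - Real.exp (-(a * u))) * u ^ (-α) =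
      a ^ (α - 1) * (Real.Gamma (2 - α) / (α - 1)) := by
  have hne : 1 - α ≠ 0 := by linarith
  have hne' : α - 1 ≠ 0 := by linarith
  have hG := Real.integral_rpow_mul_exp_neg_mul_Ioi (a := 2 - α) (r := a) (by linarith) ha
  have hu : ∀ x ∈ Set.Ioi (0:ℝ), HasDerivAt (fun u : ℝ => 1 - Real.exp (-(a * u)))
      (a * Real.exp (-(a * x))) x := by
    intro x _
    have := ((((hasDerivAt_id x).const_mul a).neg).exp).const_sub 1
    refine this.congr_deriv ?_
    simp; ring
  have hv : ∀ x ∈ Set.Ioi (0:ℝ), HasDerivAt (fun u : ℝ => u ^ (1 - α) / (1 - α))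
      (x ^ (-α)) x := by
    intro x hx
    have := (Real.hasDerivAt_rpow_const (p := 1 - α) (Or.inl (ne_of_gt hx))).div_const (1 - α)
    refine this.congr_deriv ?_
    rw [mul_div_cancel_left₀ _ hne]
    congr 1; ring
  have hI1 : IntegrableOn ((fun u : ℝ => 1 - Real.exp (-(a * u))) * fun x => x ^ (-α))
      (Set.Ioi 0) := by
    refine Integrable.mono' (aux_bd_int (a * 1) 1 (1 - α) (-α) (by linarith) (by linarith)) ?_ ?_
    · exact (Measurable.mul (by fun_prop) (by fun_prop)).aestronglyMeasurable
    · refine (ae_restrict_iff' measurableSet_Ioi).2 (ae_of_all _ fun u hu => ?_)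
      exact aux_prod_bd a u (u ^ (-α)) 1 1 α α ha hu (Real.rpow_nonneg (le_of_lt hu) _)
        (fun _ => by simp) (fun _ => by simp)
  have hI2' : IntegrableOn (fun x : ℝ => x ^ (1 - α) * Real.exp (- a * x ^ (1:ℝ))) (Set.Ioi 0) :=
    integrableOn_rpow_mul_exp_neg_mul_rpow (by linarith) one_pos ha
  have hI2 : IntegrableOn ((fun x : ℝ => a * Real.exp (-(a * x))) *
      fun u : ℝ => u ^ (1 - α) / (1 - α)) (Set.Ioi 0) := by
    have h3 : IntegrableOn (fun x : ℝ => (a / (1 - α)) *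
        (x ^ (1 - α) * Real.exp (- a * x ^ (1:ℝ)))) (Set.Ioi 0) := hI2'.const_mul (a / (1 - α))
    refine h3.congr_fun (fun x _ => ?_) measurableSet_Ioi
    simp only [Pi.mul_apply, Real.rpow_one, neg_mul]
    ring
  have hz : Tendsto ((fun u : ℝ => 1 - Real.exp (-(a * u))) *
      fun u : ℝ => u ^ (1 - α) / (1 - α)) (𝓝[>] 0) (𝓝 0) := by
    have hb : Tendsto (fun u : ℝ => (a / (α - 1)) * u ^ (2 - α)) (𝓝[>] 0) (𝓝 0) := by
      have : ContinuousAt (fun u : ℝ => (a / (α - 1)) * u ^ (2 - α)) 0 :=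
        continuousAt_const.mul (Real.continuousAt_rpow_const _ _ (Or.inr (by linarith)))
      have h := this.tendsto
      simp only [Real.zero_rpow (show 2 - α ≠ 0 by linarith), mul_zero] at h
      exact h.mono_left nhdsWithin_le_nhds
    refine squeeze_zero_norm' ?_ hb
    filter_upwards [self_mem_nhdsWithin] with u hu
    have hu : 0 < u := hu
    obtain ⟨e0, e1, e2⟩ := aux_exp_bd a u ha hu
    have hp := Real.rpow_pos_of_pos hu (1 - α)
    rw [Pi.mul_apply, norm_mul, Real.norm_of_nonneg e0, norm_div, Real.norm_of_nonneg hp.le,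
      Real.norm_of_nonpos (by linarith : 1 - α ≤ 0), neg_sub]
    calc _ ≤ (a * u) * (u ^ (1 - α) / (α - 1)) :=
          mul_le_mul_of_nonneg_right e2 (div_nonneg hp.le (by linarith))
      _ = _ := by
        rw [show 2 - α = 1 + (1 - α) by ring, Real.rpow_add hu, Real.rpow_one]; ring
  have hinf : Tendsto ((fun u : ℝ => 1 - Real.exp (-(a * u))) *
      fun u : ℝ => u ^ (1 - α) / (1 - α)) atTop (𝓝 0) := by
    have hb : Tendsto (fun u : ℝ => u ^ (-(α - 1)) / (α - 1)) atTop (𝓝 0) := by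
      simpa using (tendsto_rpow_neg_atTop (show 0 < α - 1 by linarith)).div_const (α - 1)
    refine squeeze_zero_norm' ?_ hb
    filter_upwards [eventually_gt_atTop 0] with u hu
    obtain ⟨e0, e1, e2⟩ := aux_exp_bd a u ha hu
    have hp := Real.rpow_pos_of_pos hu (1 - α)
    rw [Pi.mul_apply, norm_mul, Real.norm_of_nonneg e0, norm_div, Real.norm_of_nonneg hp.le,
      Real.norm_of_nonpos (by linarith : 1 - α ≤ 0), neg_sub, neg_sub]
    exact mul_le_of_le_one_left (div_nonneg hp.le (by linarith)) e1
  rw [integral_Ioi_mul_deriv_eq_deriv_mul hu hv hI1 hI2 hz hinf]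
  have : ∫ x in Set.Ioi (0:ℝ), a * Real.exp (-(a * x)) * (x ^ (1 - α) / (1 - α)) =
      (a / (1 - α)) * ∫ t in Set.Ioi (0:ℝ), t ^ (2 - α - 1) * Real.exp (-(a * t)) := by
    rw [← integral_const_mul]
    congr 1; ext x
    rw [show 2 - α - 1 = 1 - α by ring]; ring
  rw [this, hG, one_div, Real.inv_rpow ha.le, ← Real.rpow_neg ha.le,
    show α - 1 = 1 + -(2 - α) by ring, Real.rpow_add ha, Real.rpow_one,
    show 1 + -(2 - α) = -(1 - α) by ring, div_neg]
  ring

lemma aux_upper (F : ℝ → ℝ) (hanti : Antitone F) (hpos : ∀ t : ℝ, 0 ≤ t → 0 < F t)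
    (β T : ℝ) (hβ : 0 < β) (hT : 0 < T)
    (h : ∀ t, T ≤ t → F (2 * t) ≤ 2 ^ (-β) * F t) (n : ℕ) :
    ∀ t s, T ≤ t → t ≤ s → s ≤ 2 ^ n * (2 * t) → F s ≤ 2 ^ β * (s / t) ^ (-β) * F t := by
  have base : ∀ t s, T ≤ t → t ≤ s → s ≤ 2 * t → F s ≤ 2 ^ β * (s / t) ^ (-β) * F t := by
    intro t s ht hs h2
    have t0 : 0 < t := hT.trans_le ht
    have s0 : 0 < s := t0.trans_le hs
    refine (hanti hs).trans (le_mul_of_one_le_left (hpos t t0.le).le ?_)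
    have hst : s / t ≤ 2 := (div_le_iff₀ t0).2 h2
    have hst0 : 0 < s / t := by positivity
    rw [Real.rpow_neg hst0.le, ← div_eq_mul_inv, one_le_div (by positivity)]
    exact Real.rpow_le_rpow hst0.le hst hβ.le
  induction n with
  | zero => intro t s ht hs h2; exact base t s ht hs (by simpa using h2)
  | succ n ih =>
    intro t s ht hs h2
    rcases le_total s (2 * t) with h3 | h3
    · exact base t s ht hs h3
    have t0 : 0 < t := hT.trans_le ht
    have s0 : 0 < s := t0.trans_le hs
    have i1 := ih t (s / 2) ht (by linarith) (by rw [pow_succ] at h2; linarith)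
    have i2 := h (s / 2) (by linarith)
    rw [show 2 * (s / 2) = s by ring] at i2
    refine i2.trans ((mul_le_mul_of_nonneg_left i1 (by positivity)).trans_eq ?_)
    have : s / t = 2 * (s / 2 / t) := by ring
    rw [this, Real.mul_rpow (by norm_num) (by positivity)]
    ring

lemma aux_lower (F : ℝ → ℝ) (hanti : Antitone F) (hpos : ∀ t : ℝ, 0 ≤ t → 0 < F t)
    (γ T : ℝ) (hγ : 0 < γ) (hT : 0 < T)
    (h : ∀ t, T ≤ t → F t ≤ 2 ^ γ * F (2 * t)) (n : ℕ) :
    ∀ t s, T ≤ t → t ≤ s → s ≤ 2 ^ n * (2 * t) → F t ≤ 2 ^ γ * (s / t) ^ γ * F s := by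
  have base : ∀ t s, T ≤ t → t ≤ s → s ≤ 2 * t → F t ≤ 2 ^ γ * (s / t) ^ γ * F s := by
    intro t s ht hs h2
    have t0 : 0 < t := hT.trans_le ht
    have s0 : 0 < s := t0.trans_le hs
    have h1 : 1 ≤ (s / t) ^ γ := Real.one_le_rpow ((one_le_div t0).2 hs) hγ.le
    have h3 := (h t ht).trans (mul_le_mul_of_nonneg_left (hanti h2) (by positivity))
    refine h3.trans (mul_le_mul_of_nonneg_right ?_ (hpos s s0.le).le)
    exact le_mul_of_one_le_right (by positivity) h1
  induction n with
  | zero => intro t s ht hs h2; exact base t s ht hs (by simpa using h2)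
  | succ n ih =>
    intro t s ht hs h2
    rcases le_total s (2 * t) with h3 | h3
    · exact base t s ht hs h3
    have t0 : 0 < t := hT.trans_le ht
    have s0 : 0 < s := t0.trans_le hs
    have i1 := ih t (s / 2) ht (by linarith) (by rw [pow_succ] at h2; linarith)
    have i2 := h (s / 2) (by linarith)
    rw [show 2 * (s / 2) = s by ring] at i2
    refine i1.trans ((mul_le_mul_of_nonneg_left i2 (by positivity)).trans_eq ?_)
    have : s / t = 2 * (s / 2 / t) := by ring
    rw [this, Real.mul_rpow (by norm_num) (by positivity)]
    ring

lemma aux_n (t s : ℝ) (ht : 0 < t) : ∃ n : ℕ, s ≤ 2 ^ n * (2 * t) := by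
  obtain ⟨n, hn⟩ := pow_unbounded_of_one_lt (s / (2 * t)) (one_lt_two)
  exact ⟨n, ((div_lt_iff₀ (by positivity)).1 hn).le⟩

/-- Key limit in the α-stable scaling limit for Poisson shot-noise: for a probability
measure on [0,∞) with everywhere positive, regularly varying (index -α) tail F̄,
∫₀^∞ (1 - e^{-a u}) F̄(G u)/F̄(G) du → a^{α-1} Γ(2-α)/(α-1) as G → ∞. -/
theorem stmt_4 (α : ℝ) (hα₁ : 1 < α) (hα₂ : α < 2)
    (μ : Measure ℝ) [IsProbabilityMeasure μ]
    (F : ℝ → ℝ) (hF : ∀ t, F t = (μ (Set.Ioi t)).toReal)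
    (hFpos : ∀ t : ℝ, 0 ≤ t → 0 < F t)
    (hRV : ∀ c : ℝ, 0 < c →
      Tendsto (fun t => F (c * t) / F t) atTop (𝓝 (c ^ (-α))))
    (a : ℝ) (ha : 0 < a) :
    Tendsto
      (fun G : ℝ =>
        ∫ u in Set.Ioi (0 : ℝ), (1 - Real.exp (-(a * u))) * (F (G * u) / F G))
      atTop
      (𝓝 (a ^ (α - 1) * (Real.Gamma (2 - α) / (α - 1)))) := by
  have hanti : Antitone F := by
    intro x y hxy
    rw [hF, hF]
    exact ENNReal.toReal_mono (measure_ne_top _ _) (measure_mono (Set.Ioi_subset_Ioi hxy))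
  have hle1 : ∀ t, F t ≤ 1 := by
    intro t
    rw [hF]
    exact ENNReal.toReal_le_of_le_ofReal zero_le_one (by simpa using prob_le_one)
  obtain ⟨β, hβ1, hβ2⟩ := exists_between hα₁
  obtain ⟨γ, hγ1, hγ2⟩ := exists_between hα₂
  have hev1 : ∀ᶠ t in atTop, F (2 * t) / F t < 2 ^ (-β) :=
    (hRV 2 two_pos).eventually_lt_const
      (Real.rpow_lt_rpow_of_exponent_lt one_lt_two (by linarith))
  have hev2 : ∀ᶠ t in atTop, 2 ^ (-γ) < F (2 * t) / F t :=
    (hRV 2 two_pos).eventually_const_lt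
      (Real.rpow_lt_rpow_of_exponent_lt one_lt_two (by linarith))
  obtain ⟨T0, hT0⟩ := eventually_atTop.1 (hev1.and hev2)
  obtain ⟨T, hTT, hT⟩ : ∃ T, T0 ≤ T ∧ 0 < T := ⟨max T0 1, le_max_left _ _, by positivity⟩
  have hU : ∀ t, T ≤ t → F (2 * t) ≤ 2 ^ (-β) * F t := fun t ht =>
    ((div_lt_iff₀ (hFpos t (hT.le.trans ht))).1 (hT0 t (hTT.trans ht)).1).le
  have hL : ∀ t, T ≤ t → F t ≤ 2 ^ γ * F (2 * t) := fun t ht => by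
    have := ((lt_div_iff₀ (hFpos t (hT.le.trans ht))).1 (hT0 t (hTT.trans ht)).2).le
    rw [Real.rpow_neg two_pos.le] at this
    exact (inv_mul_le_iff₀ (by positivity)).1 this
  have hU' : ∀ t s, T ≤ t → t ≤ s → F s ≤ 2 ^ β * (s / t) ^ (-β) * F t := by
    intro t s ht hs
    obtain ⟨n, hn⟩ := aux_n t s (hT.trans_le ht)
    exact aux_upper F hanti hFpos β T (by linarith) hT hU n t s ht hs hn
  have hL' : ∀ t s, T ≤ t → t ≤ s → F t ≤ 2 ^ γ * (s / t) ^ γ * F s := by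
    intro t s ht hs
    obtain ⟨n, hn⟩ := aux_n t s (hT.trans_le ht)
    exact aux_lower F hanti hFpos γ T (by linarith) hT hL n t s ht hs hn
  have hFT := hFpos T hT.le
  have hmain : ∀ G, T ≤ G → ∀ u, 0 < u → 
      (u ≤ 1 → F (G * u) / F G ≤ (2 ^ γ / F T) * u ^ (-γ)) ∧
      (1 < u → F (G * u) / F G ≤ 2 ^ β * u ^ (-β)) := by
    intro G hG u hu
    have G0 := hT.trans_le hG
    have hFG := hFpos G G0.le
    refine ⟨fun h1 => ?_, fun h1 => ?_⟩
    · rw [div_le_iff₀ hFG]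
      rcases le_total T (G * u) with h | h
      · have := hL' (G * u) G h (mul_le_of_le_one_right G0.le h1)
        rw [show G / (G * u) = u⁻¹ by field_simp, Real.inv_rpow hu.le,
          ← Real.rpow_neg hu.le] at this
        refine this.trans (mul_le_mul_of_nonneg_right (mul_le_mul_of_nonneg_right ?_
          (by positivity)) hFG.le)
        exact le_div_self (by positivity) hFT (hle1 T)
      · have h2 := hL' T G le_rfl hG
        have h3 : (G / T) ^ γ ≤ u ^ (-γ) := by
          rw [Real.rpow_neg hu.le, ← Real.inv_rpow hu.le]
          refine Real.rpow_le_rpow (by positivity) ?_ (by linarith)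
          rw [div_le_iff₀ hT, ← div_eq_inv_mul, le_div_iff₀ hu]; exact h
        have h4 : F T ≤ 2 ^ γ * u ^ (-γ) * F G :=
          h2.trans (mul_le_mul_of_nonneg_right (mul_le_mul_of_nonneg_left h3
            (by positivity)) hFG.le)
        calc F (G * u) ≤ 1 := hle1 _
          _ = F T / F T := (div_self hFT.ne').symm
          _ ≤ (2 ^ γ * u ^ (-γ) * F G) / F T := div_le_div_of_nonneg_right h4 hFT.le
          _ = _ := by ring
    · rw [div_le_iff₀ hFG]
      have := hU' G (G * u) hG (le_mul_of_one_le_right G0.le h1.le)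
      rwa [mul_div_cancel_left₀ _ G0.ne'] at this
  rw [← aux_limit α hα₁ hα₂ a ha]
  refine tendsto_integral_filter_of_dominated_convergence
    (fun u : ℝ => if u ≤ 1 then (a * (2 ^ γ / F T)) * u ^ (1 - γ) else 2 ^ β * u ^ (-β))
    ?_ ?_ (aux_bd_int _ _ _ _ (by linarith) (by linarith)) ?_
  · refine Eventually.of_forall fun G => Measurable.aestronglyMeasurable ?_
    have hm : Measurable F := hanti.measurable
    fun_prop
  · filter_upwards [eventually_ge_atTop T] with G hG
    refine (ae_restrict_iff' measurableSet_Ioi).2 (ae_of_all _ fun u hu => ?_)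
    have hu : 0 < u := hu
    have G0 := hT.trans_le hG
    exact aux_prod_bd a u _ _ _ γ β ha hu
      (div_nonneg (hFpos _ (by positivity)).le (hFpos _ G0.le).le)
      (hmain G hG u hu).1 (hmain G hG u hu).2
  · refine (ae_restrict_iff' measurableSet_Ioi).2 (ae_of_all _ fun u hu => ?_)
    have := hRV u hu
    simp only [mul_comm u] at this
    exact this.const_mul _
end

section
/- Let d be a positive natural number and α ∈ (1,2). Let μ be a probability measure on [0,∞) whose tail function F̄(t) = μ((t,∞)) is strictly positive for all t ≥ 0 and regularly varying at infinity with index −α, i.e., for every c > 0, F̄(c t)/F̄(t) → c^{−α} as t → ∞. Let g : (0,∞) → (0,∞) be such that g(λ) → ∞ and λ F̄(g(λ)) → 1 as λ → ∞. Let ξ : ℝ^d → [0,∞) be measurable, bounded and Lebesgue-integrable. Then, with ψ(u) = e^{−u} − 1 + u, lim_{λ→∞} λ ∫_{ℝ^d} ∫₀^∞ ψ( ξ(x) t / g(λ) ) dμ(t) dx = ( Γ(2−α)/(α−1) ) ∫_{ℝ^d} ξ(x)^α dx, where the integral over ℝ^d is with respect to Lebesgue measure and ξ(x)^α is interpreted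 as 0 when ξ(x) = 0. (This is the analytic core of the α-stable scaling limit of the Poisson shot-noise field with regularly varying amplitude distribution.) -/
open MeasureTheory Filter Real Topology

lemma dbl_up (F : ℝ → ℝ) (hanti : Antitone F) (h0 : ∀ t, 0 ≤ F t) (q T : ℝ) (hq : 0 < q) (hT : 0 < T)
    (h : ∀ t, T ≤ t → F (2 * t) ≤ (2:ℝ) ^ (-q) * F t) (t s : ℝ) (ht : T ≤ t) (hs : 1 ≤ s) :
    F (s * t) ≤ (2:ℝ) ^ q * s ^ (-q) * F t := by
  have key : ∀ n : ℕ, F ((2:ℝ) ^ n * t) ≤ ((2:ℝ) ^ (-q)) ^ n * F t := by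
    intro n
    induction n with
    | zero => simp
    | succ k ih =>
      have h1 : T ≤ (2:ℝ) ^ k * t := by
        have : (1:ℝ) ≤ 2 ^ k := one_le_pow₀ (by norm_num)
        nlinarith
      calc F ((2:ℝ) ^ (k+1) * t) = F (2 * (2 ^ k * t)) := by ring_nf
        _ ≤ (2:ℝ) ^ (-q) * F (2 ^ k * t) := h _ h1
        _ ≤ (2:ℝ) ^ (-q) * (((2:ℝ) ^ (-q)) ^ k * F t) := by gcongr
        _ = _ := by ring
  obtain ⟨n, hn1, hn2⟩ := exists_nat_pow_near hs (by norm_num : (1:ℝ) < 2)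
  have ht0 : 0 < t := by linarith
  calc F (s * t) ≤ F (2 ^ n * t) := hanti (by gcongr)
    _ ≤ ((2:ℝ) ^ (-q)) ^ n * F t := key n
    _ ≤ _ := by
      apply mul_le_mul_of_nonneg_right _ (h0 t)
      have h2 : s ^ q ≤ ((2:ℝ) ^ (n+1)) ^ q := rpow_le_rpow (by linarith) hn2.le hq.le
      have h3 : ((2:ℝ) ^ (n+1)) ^ q = 2 ^ q * (2 ^ q) ^ n := by
        rw [← rpow_natCast, ← rpow_mul (by norm_num), mul_comm, rpow_mul (by norm_num), rpow_natCast, pow_succ]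
        ring
      have h4 : 0 < s ^ q := rpow_pos_of_pos (by linarith) _
      have h5 : (0:ℝ) < (2 ^ q) ^ n := by positivity
      rw [rpow_neg (by norm_num), rpow_neg (by linarith), inv_pow, ← div_eq_mul_inv, inv_eq_one_div,
        div_le_div_iff₀ h5 h4]
      linarith

lemma dbl_dn (F : ℝ → ℝ) (hanti : Antitone F) (h0 : ∀ t, 0 ≤ F t) (p T : ℝ) (hp : 0 < p) (hT : 0 < T)
    (h : ∀ t, T ≤ t → F t ≤ (2:ℝ) ^ p * F (2 * t)) (t s : ℝ) (ht : T ≤ t) (hs : 1 ≤ s) :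
    F t ≤ (2:ℝ) ^ p * s ^ p * F (s * t) := by
  have key : ∀ n : ℕ, F t ≤ ((2:ℝ) ^ p) ^ n * F ((2:ℝ) ^ n * t) := by
    intro n
    induction n with
    | zero => simp
    | succ k ih =>
      have h1 : T ≤ (2:ℝ) ^ k * t := by
        have : (1:ℝ) ≤ 2 ^ k := one_le_pow₀ (by norm_num)
        nlinarith
      calc F t ≤ _ := ih
        _ ≤ ((2:ℝ) ^ p) ^ k * ((2:ℝ) ^ p * F (2 * (2 ^ k * t))) := by gcongr; exact h _ h1
        _ = ((2:ℝ) ^ p) ^ (k+1) * F (2 * (2 ^ k * t)) := by ring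
        _ = _ := by ring_nf
  obtain ⟨n, hn1, hn2⟩ := exists_nat_pow_near hs (by norm_num : (1:ℝ) < 2)
  have ht0 : 0 < t := by linarith
  calc F t ≤ _ := key (n+1)
    _ ≤ ((2:ℝ) ^ p) ^ (n+1) * F (s * t) := by gcongr; exact hanti (by gcongr)
    _ ≤ _ := by
      apply mul_le_mul_of_nonneg_right _ (h0 _)
      have h2 : ((2:ℝ) ^ n) ^ p ≤ s ^ p := rpow_le_rpow (by positivity) hn1 hp.le
      have h3 : ((2:ℝ) ^ n) ^ p = (2 ^ p) ^ n := by
        rw [← rpow_natCast, ← rpow_mul (by norm_num), mul_comm, rpow_mul (by norm_num), rpow_natCast]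
      rw [pow_succ, mul_comm, ← h3]
      gcongr

lemma potter (F : ℝ → ℝ) (hanti : Antitone F) (hFpos : ∀ t : ℝ, 0 ≤ t → 0 < F t) (h0 : ∀ t, 0 ≤ F t)
    (h1 : ∀ t, F t ≤ 1) (α p q : ℝ) (hq : 0 < q) (hqα : q < α) (hαp : α < p)
    (hRV : Tendsto (fun t => F (2 * t) / F t) atTop (𝓝 ((2:ℝ) ^ (-α)))) :
    ∃ C T : ℝ, 0 < C ∧ 0 < T ∧ ∀ t, T ≤ t → ∀ s, 0 < s →
      F (s * t) ≤ C * (if s ≤ 1 then s ^ (-p) else s ^ (-q)) * F t := by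
  have e1 := hRV.eventually_lt_const (rpow_lt_rpow_of_exponent_lt (by norm_num : (1:ℝ) < 2) (neg_lt_neg hqα))
  have e2 := hRV.eventually_const_lt (rpow_lt_rpow_of_exponent_lt (by norm_num : (1:ℝ) < 2) (neg_lt_neg hαp))
  obtain ⟨T0, hT0⟩ := eventually_atTop.1 (e1.and e2)
  set T := max T0 1
  have hT : 0 < T := lt_of_lt_of_le one_pos (le_max_right _ _)
  have hu : ∀ t, T ≤ t → F (2 * t) ≤ (2:ℝ) ^ (-q) * F t := by
    intro t ht
    have := (hT0 t ((le_max_left _ _).trans ht)).1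
    rw [div_lt_iff₀ (hFpos t (by linarith))] at this
    exact this.le
  have hd : ∀ t, T ≤ t → F t ≤ (2:ℝ) ^ p * F (2 * t) := by
    intro t ht
    have := (hT0 t ((le_max_left _ _).trans ht)).2
    rw [lt_div_iff₀ (hFpos t (by linarith)), rpow_neg (by norm_num), inv_mul_lt_iff₀ (by positivity)] at this
    exact this.le
  have hp : 0 < p := by linarith
  have hFT : 0 < F T := hFpos T hT.le
  have hFT1 : 1 ≤ (F T)⁻¹ := (one_le_inv₀ hFT).2 (h1 T)
  refine ⟨(2:ℝ) ^ q + (F T)⁻¹ * 2 ^ p, T, by positivity, hT, fun t ht s hs => ?_⟩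
  have ht0 : 0 < t := by linarith
  split_ifs with hs1
  · have hsp : 0 < s ^ (-p) := rpow_pos_of_pos hs _
    have main : F (s * t) ≤ (F T)⁻¹ * 2 ^ p * s ^ (-p) * F t := by
      by_cases hst : T ≤ s * t
      · have := dbl_dn F hanti h0 p T hp hT hd (s * t) s⁻¹ hst ((one_le_inv₀ hs).2 hs1)
        rw [inv_mul_cancel_left₀ hs.ne', inv_rpow hs.le, ← rpow_neg hs.le] at this
        refine this.trans ?_
        have : 0 ≤ (2:ℝ) ^ p * s ^ (-p) * F t := mul_nonneg (by positivity) (h0 t)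
        nlinarith
      · push Not at hst
        have := dbl_dn F hanti h0 p T hp hT hd T (t / T) le_rfl ((one_le_div hT).2 ht)
        rw [div_mul_cancel₀ _ hT.ne'] at this
        have h6 : (t / T) ^ p ≤ s ^ (-p) := by
          rw [rpow_neg hs.le, ← inv_rpow hs.le]
          apply rpow_le_rpow (by positivity) _ hp.le
          rw [div_le_iff₀ hT, inv_mul_eq_div, le_div_iff₀ hs]; linarith
        have h7 : F T ≤ 2 ^ p * s ^ (-p) * F t := this.trans (by have := h0 t; gcongr)
        calc F (s * t) ≤ 1 := h1 _
          _ = (F T)⁻¹ * F T := (inv_mul_cancel₀ hFT.ne').symm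
          _ ≤ (F T)⁻¹ * (2 ^ p * s ^ (-p) * F t) := by gcongr
          _ = _ := by ring
    refine main.trans ?_
    have := h0 t
    gcongr
    have : (0:ℝ) < 2 ^ q := by positivity
    linarith
  · push Not at hs1
    have := dbl_up F hanti h0 q T hq hT hu t s ht hs1.le
    refine this.trans ?_
    have := h0 t
    gcongr
    have : (0:ℝ) < (F T)⁻¹ * 2 ^ p := by positivity
    linarith

noncomputable def bnd (p q s : ℝ) : ℝ := if s ≤ 1 then s ^ (1 - p) else s ^ (-q)

lemma bnd_int (p q : ℝ) (hp : p < 2) (hq : 1 < q) : IntegrableOn (bnd p q) (Set.Ioi 0) := by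
  rw [← Set.Ioc_union_Ioi_eq_Ioi (zero_le_one (α := ℝ))]
  apply IntegrableOn.union
  · have : IntegrableOn (fun s : ℝ => s ^ (1 - p)) (Set.Ioc 0 1) :=
      (intervalIntegrable_iff_integrableOn_Ioc_of_le zero_le_one).1
        (intervalIntegral.intervalIntegrable_rpow' (by linarith))
    refine this.congr_fun (fun s hs => ?_) measurableSet_Ioc
    simp [bnd, hs.2]
  · have : IntegrableOn (fun s : ℝ => s ^ (-q)) (Set.Ioi 1) :=
      integrableOn_Ioi_rpow_of_lt (by linarith) one_pos
    refine this.congr_fun (fun s hs => ?_) measurableSet_Ioi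
    have : ¬ s ≤ 1 := not_le.2 hs
    simp [bnd, this]

lemma one_sub_exp_nonneg' (u : ℝ) (hu : 0 ≤ u) : 0 ≤ 1 - exp (-u) := by
  have : exp (-u) ≤ 1 := exp_le_one_iff.2 (by linarith)
  linarith

lemma one_sub_exp_le' (u : ℝ) : 1 - exp (-u) ≤ u := by
  have := add_one_le_exp (-u)
  linarith

lemma ker_le (p q B x s : ℝ) (hx : 0 ≤ x) (hB : x ≤ B) (hs : 0 < s) :
    x * (1 - exp (-(x * s))) * (if s ≤ 1 then s ^ (-p) else s ^ (-q)) ≤ x * (1 + B) * bnd p q s := by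
  unfold bnd
  have h1 := one_sub_exp_le' (x * s)
  have h2 : 1 - exp (-(x * s)) ≤ 1 := by have := exp_pos (-(x*s)); linarith
  split_ifs with h
  · rw [sub_eq_add_neg 1 p, rpow_add hs, rpow_one]
    have : 1 - exp (-(x * s)) ≤ (1 + B) * s := by nlinarith
    have h3 := rpow_pos_of_pos hs (-p)
    calc _ ≤ x * ((1 + B) * s) * s ^ (-p) := by gcongr
      _ = _ := by ring
  · have h3 := rpow_pos_of_pos hs (-q)
    gcongr
    linarith

lemma ker_meas : Measurable (fun z : ℝ × ℝ => z.1 * (1 - exp (-(z.1 * z.2)))) := by fun_prop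

lemma gam_int (α : ℝ) (h1 : 1 < α) (h2 : α < 2) :
    IntegrableOn (fun s : ℝ => (1 - exp (-s)) * s ^ (-α)) (Set.Ioi 0) := by
  have hb := (bnd_int α α h2 h1).const_mul (2:ℝ)
  refine Integrable.mono' hb (by fun_prop) ?_
  filter_upwards [self_mem_ae_restrict measurableSet_Ioi] with s hs
  have hs : 0 < s := hs
  have := ker_le α α 1 1 s zero_le_one le_rfl hs
  rw [norm_of_nonneg (mul_nonneg (one_sub_exp_nonneg' s hs.le) (rpow_nonneg hs.le _))]
  simp only [ite_self, one_mul] at this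
  linarith

lemma gam_val (α : ℝ) (h1 : 1 < α) (h2 : α < 2) :
    ∫ s in Set.Ioi (0:ℝ), (1 - exp (-s)) * s ^ (-α) = Gamma (2 - α) / (α - 1) := by
  have hne : 1 - α ≠ 0 := by linarith
  have hg := GammaIntegral_convergent (s := 2 - α) (by linarith)
  have e : 2 - α - 1 = 1 - α := by ring
  have := integral_Ioi_mul_deriv_eq_deriv_mul (a := 0) (a' := (0:ℝ)) (b' := (0:ℝ))
    (u := fun s : ℝ => 1 - exp (-s)) (u' := fun s => exp (-s))
    (v := fun s : ℝ => s ^ (1 - α) / (1 - α)) (v' := fun s => s ^ (-α)) ?_ ?_ ?_ ?_ ?_ ?_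
  · rw [this, Gamma_eq_integral (by linarith), e, ← integral_div, sub_self, zero_sub, ← integral_neg]
    congr 1; ext s
    have : α - 1 ≠ 0 := by linarith
    field_simp
    ring
  · intro s hs
    have := ((hasDerivAt_id s).neg.exp).const_sub 1
    simpa using this
  · intro s hs
    have := ((hasDerivAt_rpow_const (x := s) (p := 1 - α) (Or.inl (ne_of_gt hs)))).div_const (1 - α)
    convert this using 1
    rw [mul_div_cancel_left₀ _ hne]; congr 1; ring
  · exact gam_int α h1 h2
  · rw [e] at hg
    refine (hg.div_const (1 - α)).congr ?_
    filter_upwards with s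
    simp [mul_div_assoc]
  · have hl : Tendsto (fun s : ℝ => s ^ (2 - α) / (α - 1)) (𝓝[>] 0) (𝓝 0) := by
      have : ContinuousAt (fun s : ℝ => s ^ (2 - α)) 0 := continuousAt_rpow_const _ _ (Or.inr (by linarith))
      have := (this.tendsto.mono_left (nhdsWithin_le_nhds (s := Set.Ioi 0))).div_const (α - 1)
      simpa [zero_rpow (by linarith : 2 - α ≠ 0)] using this
    apply squeeze_zero_norm' _ hl
    filter_upwards [self_mem_nhdsWithin] with s hs
    have hs : 0 < s := hs
    have h3 := one_sub_exp_nonneg' s hs.le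
    have h4 := rpow_pos_of_pos hs (1 - α)
    have : s ^ (2 - α) = s * s ^ (1 - α) := by
      rw [← rpow_one_add' hs.le (by linarith)]; congr 1; ring
    simp only [Pi.mul_apply, norm_mul, norm_div, norm_eq_abs, abs_of_nonneg h3, abs_of_pos h4,
      abs_of_neg (by linarith : 1 - α < 0), this, neg_sub, mul_div_assoc]
    have : 0 < α - 1 := by linarith
    gcongr
    exact one_sub_exp_le' s
  · have hl : Tendsto (fun s : ℝ => s ^ (1 - α) / (α - 1)) atTop (𝓝 0) := by
      have := (tendsto_rpow_neg_atTop (y := α - 1) (by linarith)).div_const (α - 1)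
      simpa using this
    apply squeeze_zero_norm' _ hl
    filter_upwards [eventually_gt_atTop 0] with s hs
    have h3 := one_sub_exp_nonneg' s hs.le
    have h4 := rpow_pos_of_pos hs (1 - α)
    simp only [Pi.mul_apply, norm_mul, norm_div, norm_eq_abs, abs_of_nonneg h3, abs_of_pos h4,
      abs_of_neg (by linarith : 1 - α < 0), neg_sub]
    have h5 : 0 < α - 1 := by linarith
    apply mul_le_of_le_one_left (by positivity)
    have := exp_pos (-s); linarith

lemma gam_scale (α x : ℝ) (h1 : 1 < α) (h2 : α < 2) (hx : 0 ≤ x) :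
    ∫ s in Set.Ioi (0:ℝ), x * (1 - exp (-(x * s))) * s ^ (-α) = Gamma (2 - α) / (α - 1) * x ^ α := by
  rcases hx.eq_or_lt with rfl | hx
  · simp [zero_rpow (by linarith : α ≠ 0)]
  have := integral_comp_mul_left_Ioi (fun s : ℝ => (1 - exp (-s)) * s ^ (-α)) 0 hx
  rw [mul_zero, gam_val α h1 h2, smul_eq_mul] at this
  have e : ∫ s in Set.Ioi (0:ℝ), x * (1 - exp (-(x * s))) * s ^ (-α)
      = ∫ s in Set.Ioi (0:ℝ), (x * x ^ α) * ((1 - exp (-(x * s))) * (x * s) ^ (-α)) := by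
    apply setIntegral_congr_fun measurableSet_Ioi
    intro s hs
    have hs : 0 < s := hs
    have h3 := rpow_pos_of_pos hx α
    simp only [mul_rpow hx.le hs.le, rpow_neg hx.le]
    field_simp
  rw [e, integral_const_mul, this]
  field_simp

lemma layer (μ : Measure ℝ) [IsProbabilityMeasure μ] (hμsupp : μ (Set.Iio 0) = 0)
    (F : ℝ → ℝ) (hF : ∀ t, F t = (μ (Set.Ioi t)).toReal) (hFm : Measurable F) (x G : ℝ) (hx : 0 ≤ x) (hG : 0 < G) :
    ∫ t, (exp (-(x * t / G)) - 1 + x * t / G) ∂μ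
      = ∫ s in Set.Ioi (0:ℝ), x * (1 - exp (-(x * s))) * F (s * G) := by
  have hnn : ∀ᵐ t ∂μ, 0 ≤ t := by
    rw [ae_iff]; simpa [Set.Iio] using hμsupp
  have hcont : Continuous (fun s : ℝ => x * (1 - exp (-(x * s)))) := by fun_prop
  have hL := lintegral_comp_eq_lintegral_meas_lt_mul (f := fun t : ℝ => t / G)
    (g := fun s => x * (1 - exp (-(x * s)))) μ
    (by filter_upwards [hnn] with t ht using div_nonneg ht hG.le) (by fun_prop)
    (fun t _ => hcont.intervalIntegrable _ _)
    (by
      filter_upwards [self_mem_ae_restrict measurableSet_Ioi] with s hs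
      exact mul_nonneg hx (one_sub_exp_nonneg' _ (mul_nonneg hx (le_of_lt hs))))
  have hprim : ∀ T : ℝ, ∫ s in (0:ℝ)..T, x * (1 - exp (-(x * s))) = exp (-(x * T)) - 1 + x * T := by
    intro T
    rw [intervalIntegral.integral_eq_sub_of_hasDerivAt (f := fun s => exp (-(x * s)) + x * s)
      (fun s _ => ?_) (hcont.intervalIntegrable _ _)]
    · simp; ring
    · have := (((hasDerivAt_id s).const_mul x).neg.exp).add ((hasDerivAt_id s).const_mul x)
      refine this.congr_deriv ?_
      change exp (-(x * s)) * -(x * 1) + x * 1 = _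
      ring
  rw [integral_eq_lintegral_of_nonneg_ae, integral_eq_lintegral_of_nonneg_ae]
  · congr 1
    simp only [hprim] at hL
    simp only [mul_div_assoc]
    rw [hL]
    apply setLIntegral_congr_fun measurableSet_Ioi
    intro s hs
    have hset : {a : ℝ | s < a / G} = Set.Ioi (s * G) := by
      ext a; simp [lt_div_iff₀ hG]
    simp only [hset]
    rw [ENNReal.ofReal_mul (mul_nonneg hx (one_sub_exp_nonneg' _ (mul_nonneg hx (le_of_lt hs)))), hF,
      ENNReal.ofReal_toReal (measure_ne_top _ _), mul_comm]
  · filter_upwards [self_mem_ae_restrict measurableSet_Ioi] with s hs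
    refine mul_nonneg (mul_nonneg hx (one_sub_exp_nonneg' _ (mul_nonneg hx (le_of_lt hs)))) ?_
    rw [hF]; exact ENNReal.toReal_nonneg
  · exact (Measurable.aestronglyMeasurable (by fun_prop))
  · filter_upwards with t
    have := add_one_le_exp (-(x * t / G))
    simp only [Pi.zero_apply]
    linarith
  · exact (Measurable.aestronglyMeasurable (by fun_prop))

/-- Analytic core of the α-stable scaling limit of the Poisson shot-noise field with
regularly varying amplitude distribution. -/
theorem stmt_5 (d : ℕ) (hd : 0 < d) (α : ℝ) (hα₁ : 1 < α) (hα₂ : α < 2)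
    (μ : Measure ℝ) [IsProbabilityMeasure μ] (hμsupp : μ (Set.Iio 0) = 0)
    (F : ℝ → ℝ) (hF : ∀ t, F t = (μ (Set.Ioi t)).toReal)
    (hFpos : ∀ t : ℝ, 0 ≤ t → 0 < F t)
    (hRV : ∀ c : ℝ, 0 < c →
      Tendsto (fun t => F (c * t) / F t) atTop (𝓝 (c ^ (-α))))
    (g : ℝ → ℝ) (hgpos : ∀ lam : ℝ, 0 < lam → 0 < g lam)
    (hgtop : Tendsto g atTop atTop)
    (hginv : Tendsto (fun lam => lam * F (g lam)) atTop (𝓝 1))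
    (ξ : (Fin d → ℝ) → ℝ) (hξmeas : Measurable ξ) (hξnn : ∀ x, 0 ≤ ξ x)
    (B : ℝ) (hξbd : ∀ x, ξ x ≤ B) (hξint : Integrable ξ) :
    Tendsto
      (fun lam : ℝ =>
        lam * ∫ x, ∫ t,
          (Real.exp (-(ξ x * t / g lam)) - 1 + ξ x * t / g lam) ∂μ)
      atTop
      (𝓝 ((Real.Gamma (2 - α) / (α - 1)) * ∫ x, (ξ x) ^ α)) := by
  have hanti : Antitone F := by
    intro a b hab
    rw [hF, hF]
    exact ENNReal.toReal_mono (measure_ne_top _ _) (measure_mono (Set.Ioi_subset_Ioi hab))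
  have hFm : Measurable F := hanti.measurable
  have h0 : ∀ t, 0 ≤ F t := fun t => by rw [hF]; exact ENNReal.toReal_nonneg
  have h1 : ∀ t, F t ≤ 1 := fun t => by
    rw [hF]; exact ENNReal.toReal_le_of_le_ofReal zero_le_one (by simpa using prob_le_one)
  obtain ⟨q, hq1, hqα⟩ := exists_between hα₁
  obtain ⟨p, hαp, hp2⟩ := exists_between hα₂
  obtain ⟨C, T, hC, hT, hP⟩ := potter F hanti hFpos h0 h1 α p q (by linarith) hqα hαp (hRV 2 (by norm_num))
  have hB : 0 ≤ B := (hξnn 0).trans (hξbd 0)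
  -- pointwise bound
  have hbd : ∀ᶠ lam : ℝ in atTop, ∀ x, ∀ s ∈ Set.Ioi (0:ℝ),
      ‖lam * (ξ x * (1 - exp (-(ξ x * s))) * F (s * g lam))‖ ≤ ξ x * ((1 + B) * (2 * C) * bnd p q s) := by
    filter_upwards [eventually_gt_atTop 0, hgtop.eventually_ge_atTop T,
      hginv.eventually_lt_const (by norm_num : (1:ℝ) < 2)] with lam hl hgl hl2 x s hs
    have hs : 0 < s := hs
    have hk : 0 ≤ ξ x * (1 - exp (-(ξ x * s))) :=
      mul_nonneg (hξnn x) (one_sub_exp_nonneg' _ (mul_nonneg (hξnn x) hs.le))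
    rw [norm_of_nonneg (mul_nonneg hl.le (mul_nonneg hk (h0 _)))]
    have h3 := hP (g lam) hgl s hs
    have h4 := ker_le p q B (ξ x) s (hξnn x) (hξbd x) hs
    set w := (if s ≤ 1 then s ^ (-p) else s ^ (-q)) with hw
    have hw0 : 0 ≤ w := by rw [hw]; split_ifs <;> exact rpow_nonneg hs.le _
    calc _ ≤ lam * (ξ x * (1 - exp (-(ξ x * s))) * (C * w * F (g lam))) := by gcongr
      _ = (lam * F (g lam)) * (C * (ξ x * (1 - exp (-(ξ x * s))) * w)) := by ring
      _ ≤ 2 * (C * (ξ x * (1 - exp (-(ξ x * s))) * w)) := by gcongr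
      _ ≤ 2 * (C * (ξ x * (1 + B) * bnd p q s)) := by gcongr
      _ = _ := by ring
  -- pointwise limit
  have hlim : ∀ s : ℝ, 0 < s → Tendsto (fun lam => lam * F (s * g lam)) atTop (𝓝 (s ^ (-α))) := by
    intro s hs
    have := hginv.mul ((hRV s hs).comp hgtop)
    rw [one_mul] at this
    refine this.congr' ?_
    filter_upwards [eventually_gt_atTop 0] with lam hl
    have := hFpos _ (hgpos lam hl).le
    simp only [Function.comp]
    field_simp
  have hbi := (bnd_int p q hp2 hq1).const_mul ((1 + B) * (2 * C))
  have inner : ∀ x, Tendsto (fun lam : ℝ => ∫ s in Set.Ioi (0:ℝ),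
      lam * (ξ x * (1 - exp (-(ξ x * s))) * F (s * g lam))) atTop
      (𝓝 (Gamma (2 - α) / (α - 1) * ξ x ^ α)) := by
    intro x
    rw [← gam_scale α (ξ x) hα₁ hα₂ (hξnn x)]
    apply tendsto_integral_filter_of_dominated_convergence
      (fun s => ξ x * ((1 + B) * (2 * C) * bnd p q s))
    · filter_upwards with lam
      exact Measurable.aestronglyMeasurable (by fun_prop)
    · filter_upwards [hbd] with lam hl
      filter_upwards [self_mem_ae_restrict measurableSet_Ioi] with s hs using hl x s hs
    · exact hbi.const_mul _
    · filter_upwards [self_mem_ae_restrict measurableSet_Ioi] with s hs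
      refine ((hlim s hs).const_mul (ξ x * (1 - exp (-(ξ x * s))))).congr fun lam => ?_
      ring
  have outer : Tendsto (fun lam : ℝ => ∫ x, ∫ s in Set.Ioi (0:ℝ),
      lam * (ξ x * (1 - exp (-(ξ x * s))) * F (s * g lam))) atTop
      (𝓝 (∫ x, Gamma (2 - α) / (α - 1) * ξ x ^ α)) := by
    apply tendsto_integral_filter_of_dominated_convergence
      (fun x => ξ x * ∫ s in Set.Ioi (0:ℝ), ((1 + B) * (2 * C) * bnd p q s))
    · filter_upwards with lam
      apply StronglyMeasurable.aestronglyMeasurable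
      apply StronglyMeasurable.integral_prod_right
      apply Measurable.stronglyMeasurable
      simp only [Function.uncurry_def]
      fun_prop
    · filter_upwards [hbd] with lam hl
      filter_upwards with x
      rw [← integral_const_mul]
      apply norm_integral_le_of_norm_le (hbi.const_mul _)
      filter_upwards [self_mem_ae_restrict measurableSet_Ioi] with s hs using hl x s hs
    · exact hξint.mul_const _
    · filter_upwards with x using inner x
  rw [integral_const_mul] at outer
  refine outer.congr' ?_
  filter_upwards [eventually_gt_atTop 0] with lam hl
  rw [← integral_const_mul]
  congr 1; ext x
  rw [layer μ hμsupp F hF hFm (ξ x) (g lam) (hξnn x) (hgpos lam hl), integral_const_mul]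
end
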